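/- Let (X,d) be a compact metric space, f_{1,∞} an NDS on X, and Z a nonempty compact subset of X. Then h^B_{top}(f_{1,∞},Z) = h^{WB}_{top}(f_{1,∞},Z) = sup{ h̲_μ(f_{1,∞}) : μ a Borel probability measure on X with μ(Z) = 1 }. -/

import Mathlib

/-!
The theorem follows from the cycle of inequalities
`hWBtop ≤ hBtop ≤ sup hmeas ≤ hWBtop`.

* `hWBtop_le_hBtop`: a cover is a weighted cover with all weights equal to `1`.

* `hBtop_le_iSup_hmeas`: a Frostman argument. Fix `ε` and let `Q g` (`fracCover`) be the minimal cost
  `∑ w i * exp (-s n i)` of a fractional cover of a function `g` on `Z` by Bowen balls of radius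
  `ε / 2` and orders `n i ≥ N`. The functional `Q` is sublinear and vanishes on functions that are
  nonpositive on `Z`. Hahn–Banach extends `t • 1 ↦ t * Q 1` from the constants to a linear functional
  on `C(X, ℝ)` dominated by `Q`. It is positive, and the Riesz–Markov–Kakutani theorem turns it into
  a measure which, after normalisation, is a probability measure on `Z` with
  `μ (B_n(x, ε / 2)) ≤ exp (-s n) / Q 1` for all `x` and all `n ≥ N`
  (`exists_measure_le_of_fracCover`). Hence its local entropy is everywhere at least `s`.
  This needs `Q 1 > 0`, which is deduced from the positivity of the unweighted quantity `Mpre` at the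
  exponent `s + δ` and radius `ε` (`Mpre_le_fracCover`). Given a fractional cover, every point of `Z`
  receives weight at least `exp (-δ n)` from the balls of some order `n`, because these thresholds
  sum to less than `1` over `n ≥ N`. Among the points belonging to a given `n` a maximal separated set
  for the Bowen metric `d_n` has disjoint balls of radius `ε / 2`, so its cardinality is controlled by
  the total weight at order `n`, and the balls of radius `ε` around it cover these points. Since only
  balls of equal order are compared, no Vitali-type selection is needed.

* `hmeas_le_hWBtop`: the mass distribution principle. If `s < hmeas f μ`, some set `A` of positive
  outer measure has `μ (B_n(y, 2 * ε)) ≤ exp (-s n)` for all `y ∈ A` and all large `n`. Integrating a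
  weighted cover of `Z` by balls of radius `ε`, restricted to the balls that meet `A`, bounds its cost
  below by the outer measure of `A ∩ Z`.
-/

open Filter MeasureTheory Set ENNReal

noncomputable section

variable {X : Type} [MetricSpace X]

/-- The iterate `f_1^n = f_n ∘ ⋯ ∘ f_1` of the NDS `f`, where `f 0` is the first map `f_1`. -/
def nIter (f : ℕ → X → X) : ℕ → X → X
  | 0 => id
  | n + 1 => f n ∘ nIter f n

/-- The Bowen (dynamical) ball `B_n(x, ε)` for the Bowen metric
`d_n(x,y) = max_{0 ≤ j < n} d(f_1^j x, f_1^j y)`. -/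
def bowenBall (f : ℕ → X → X) (n : ℕ) (x : X) (ε : ℝ) : Set X :=
  {y | ∀ j < n, dist (nIter f j x) (nIter f j y) < ε}

/-- The Birkhoff sum `S_{1,n} ψ (x) = ∑_{j=0}^{n-1} ψ(f_1^j x)`. -/
def birkSum (f : ℕ → X → X) (ψ : X → ℝ) (n : ℕ) (x : X) : ℝ :=
  ∑ j ∈ Finset.range n, ψ (nIter f j x)

/-- `S_{1,n} ψ (x, ε) = sup_{y ∈ B_n(x,ε)} S_{1,n} ψ (y)`. -/
def birkSupBall (f : ℕ → X → X) (ψ : X → ℝ) (n : ℕ) (x : X) (ε : ℝ) : ℝ :=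
  sSup (birkSum f ψ n '' bowenBall f n x ε)

/-- `M(n, α, ε, Z, ψ)`: infimum of `∑_i exp(-α n_i + S_{1,n_i}ψ(x_i, ε))` over all finite or
countable covers `Z ⊆ ⋃_i B_{n_i}(x_i, ε)` with `n_i ≥ n`. -/
def Mpre (f : ℕ → X → X) (ψ : X → ℝ) (Z : Set X) (n : ℕ) (α ε : ℝ) : ℝ≥0∞ :=
  sInf { S : ℝ≥0∞ | ∃ (u : Set ℕ) (c : ℕ → X) (m : ℕ → ℕ),
    (∀ i ∈ u, n ≤ m i) ∧ (Z ⊆ ⋃ i ∈ u, bowenBall f (m i) (c i) ε) ∧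
    S = ∑' i : u, ENNReal.ofReal (Real.exp (-α * (m i : ℝ) + birkSupBall f ψ (m i) (c i) ε)) }

/-- `𝓜(n, α, ε, Z, ψ)`: as `Mpre` but with the Birkhoff sums evaluated at the centers. -/
def MpreC (f : ℕ → X → X) (ψ : X → ℝ) (Z : Set X) (n : ℕ) (α ε : ℝ) : ℝ≥0∞ :=
  sInf { S : ℝ≥0∞ | ∃ (u : Set ℕ) (c : ℕ → X) (m : ℕ → ℕ),
    (∀ i ∈ u, n ≤ m i) ∧ (Z ⊆ ⋃ i ∈ u, bowenBall f (m i) (c i) ε) ∧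
    S = ∑' i : u, ENNReal.ofReal (Real.exp (-α * (m i : ℝ) + birkSum f ψ (m i) (c i))) }

/-- `M(α, ε, Z, ψ) = lim_{n→∞} M(n, α, ε, Z, ψ)`; the quantity is nondecreasing in `n`,
so the limit is the supremum. -/
def Mlim (f : ℕ → X → X) (ψ : X → ℝ) (Z : Set X) (α ε : ℝ) : ℝ≥0∞ :=
  ⨆ n : ℕ, Mpre f ψ Z n α ε

/-- `𝓜(α, ε, Z, ψ) = lim_{n→∞} 𝓜(n, α, ε, Z, ψ)`. -/
def MlimC (f : ℕ → X → X) (ψ : X → ℝ) (Z : Set X) (α ε : ℝ) : ℝ≥0∞ :=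
  ⨆ n : ℕ, MpreC f ψ Z n α ε

/-- `P^B(ε, Z, ψ) = inf {α : M(α, ε, Z, ψ) = 0}`, as an extended real. -/
def PBeps (f : ℕ → X → X) (ψ : X → ℝ) (Z : Set X) (ε : ℝ) : EReal :=
  sInf (Real.toEReal '' {α : ℝ | Mlim f ψ Z α ε = 0})

/-- `𝒫^B(ε, Z, ψ) = inf {α : 𝓜(α, ε, Z, ψ) = 0}`. -/
def PBCeps (f : ℕ → X → X) (ψ : X → ℝ) (Z : Set X) (ε : ℝ) : EReal :=
  sInf (Real.toEReal '' {α : ℝ | MlimC f ψ Z α ε = 0})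

/-- The Pesin–Pitskel topological pressure `P^B_{f_{1,∞}}(Z, ψ) = lim_{ε→0} P^B(ε, Z, ψ)`. -/
def PB (f : ℕ → X → X) (ψ : X → ℝ) (Z : Set X) : EReal :=
  limUnder (nhdsWithin 0 (Ioi 0)) fun ε : ℝ => PBeps f ψ Z ε

/-- `W(n, α, ε, Z, ψ)`: the weighted analogue of `Mpre`. -/
def Wpre (f : ℕ → X → X) (ψ : X → ℝ) (Z : Set X) (n : ℕ) (α ε : ℝ) : ℝ≥0∞ :=
  sInf { S : ℝ≥0∞ | ∃ (u : Set ℕ) (cx : ℕ → X) (m : ℕ → ℕ) (c : ℕ → ℝ),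
    (∀ i ∈ u, 0 < c i) ∧ (∀ i ∈ u, n ≤ m i) ∧
    (∀ z ∈ Z, 1 ≤ ∑' i : u,
      (bowenBall f (m i) (cx i) ε).indicator (fun _ => ENNReal.ofReal (c i)) z) ∧
    S = ∑' i : u, ENNReal.ofReal (c i) *
      ENNReal.ofReal (Real.exp (-α * (m i : ℝ) + birkSupBall f ψ (m i) (cx i) ε)) }

/-- `W(α, ε, Z, ψ) = lim_{n→∞} W(n, α, ε, Z, ψ)`. -/
def Wlim (f : ℕ → X → X) (ψ : X → ℝ) (Z : Set X) (α ε : ℝ) : ℝ≥0∞ :=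
  ⨆ n : ℕ, Wpre f ψ Z n α ε

/-- `P^W(ε, Z, ψ)`: the critical value of `α` at which `W(α, ε, Z, ψ)` jumps from `∞` to `0`. -/
def PWeps (f : ℕ → X → X) (ψ : X → ℝ) (Z : Set X) (ε : ℝ) : EReal :=
  sInf (Real.toEReal '' {α : ℝ | Wlim f ψ Z α ε = 0})

/-- The weighted topological pressure `P^W_{f_{1,∞}}(Z, ψ) = lim_{ε→0} P^W(ε, Z, ψ)`. -/
def PW (f : ℕ → X → X) (ψ : X → ℝ) (Z : Set X) : EReal :=
  limUnder (nhdsWithin 0 (Ioi 0)) fun ε : ℝ => PWeps f ψ Z ε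

/-- Bowen topological entropy `h^B_top(f_{1,∞}, Z)`, i.e. pressure of the zero potential. -/
def hBtop (f : ℕ → X → X) (Z : Set X) : EReal := PB f (fun _ => 0) Z

/-- Weighted Bowen topological entropy `h^{WB}_top(f_{1,∞}, Z)`. -/
def hWBtop (f : ℕ → X → X) (Z : Set X) : EReal := PW f (fun _ => 0) Z

/-- `EReal → ℝ≥0∞`, sending `⊤` to `⊤` and everything negative to `0`. -/
def ERealToENNReal (x : EReal) : ℝ≥0∞ := if x = ⊤ then ⊤ else ENNReal.ofReal x.toReal

variable [MeasurableSpace X]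

/-- The measure-theoretic local pressure
`P_μ(x,ψ) = lim_{ε→0} liminf_{n→∞} (-log μ(B_n(x,ε)) + S_{1,n}ψ(x))/n`. -/
def Ploc (f : ℕ → X → X) (μ : Measure X) (ψ : X → ℝ) (x : X) : EReal :=
  limUnder (nhdsWithin 0 (Ioi 0)) fun ε : ℝ =>
    Filter.atTop.liminf fun n : ℕ =>
      (((n : ℝ)⁻¹ : ℝ) : EReal) *
        (-(ENNReal.log (μ (bowenBall f n x ε))) + ((birkSum f ψ n x : ℝ) : EReal))

/-- The integral of an extended-real-valued function: the difference of the lower integrals of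
its positive and negative parts. -/
def ERealIntegral (μ : Measure X) (g : X → EReal) : EReal :=
  ((∫⁻ x, ERealToENNReal (g x) ∂μ : ℝ≥0∞) : EReal)
    - ((∫⁻ x, ERealToENNReal (-(g x)) ∂μ : ℝ≥0∞) : EReal)

/-- The measure-theoretic pressure `P_μ(X, ψ) = ∫ P_μ(x, ψ) dμ(x)`. -/
def Pmeas (f : ℕ → X → X) (μ : Measure X) (ψ : X → ℝ) : EReal :=
  ERealIntegral μ (Ploc f μ ψ)

/-- The measure-theoretic local lower entropy `h̲_μ(f_{1,∞}, x)`. -/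
def hloc (f : ℕ → X → X) (μ : Measure X) (x : X) : EReal := Ploc f μ (fun _ => 0) x

/-- The measure-theoretic lower entropy `h̲_μ(f_{1,∞}) = ∫ h̲_μ(f_{1,∞}, x) dμ(x)`. -/
def hmeas (f : ℕ → X → X) (μ : Measure X) : EReal := Pmeas f μ (fun _ => 0)


/-! ### Frostman's lemma for fractional covers -/

/-- The fractional covering number of a function `g` on `Z`: the infimum of the total cost
`∑ w i * a i` over all nonnegative weights `w` on the family of sets `B` for which
`∑ w i * χ_{B i} ≥ g` on `Z`. Negative values of `g` are truncated to `0` by `ENNReal.ofReal`.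
The index type may be uncountable: a finite total cost forces all relevant weights but countably
many to vanish. -/
def fracCover {Y ι : Type} (Z : Set Y) (B : ι → Set Y) (a : ι → ℝ≥0∞) (g : Y → ℝ) : ℝ≥0∞ :=
  ⨅ (w : ι → ℝ≥0∞) (_ : ∀ z ∈ Z, ENNReal.ofReal (g z) ≤ ∑' i, w i * (B i).indicator 1 z),
    ∑' i, w i * a i

section fracCover

variable {Y ι : Type} {Z : Set Y} {B : ι → Set Y} {a : ι → ℝ≥0∞}

lemma fracCover_add (g h : Y → ℝ) :
    fracCover Z B a (g + h) ≤ fracCover Z B a g + fracCover Z B a h := by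
  simp only [fracCover, ENNReal.iInf_add, ENNReal.add_iInf, le_iInf_iff]
  intro v hv w hw
  refine (iInf₂_le (w + v) fun z hz => ?_).trans ?_
  · calc ENNReal.ofReal ((g + h) z) ≤ ENNReal.ofReal (g z) + ENNReal.ofReal (h z) :=
          ENNReal.ofReal_add_le
      _ ≤ _ := by
          simp only [Pi.add_apply, add_mul, ENNReal.tsum_add]
          gcongr
          exacts [hw z hz, hv z hz]
  · simp only [Pi.add_apply, add_mul, ENNReal.tsum_add]
    rw [add_comm]

lemma fracCover_smul_le {t : ℝ} (ht : 0 < t) (g : Y → ℝ) :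
    fracCover Z B a (t • g) ≤ ENNReal.ofReal t * fracCover Z B a g := by
  have h0 : ENNReal.ofReal t ≠ 0 := by simpa using ht
  simp only [fracCover, ENNReal.mul_iInf_of_ne h0 ENNReal.ofReal_ne_top, le_iInf_iff]
  intro w hw
  refine (iInf₂_le (fun i => ENNReal.ofReal t * w i) fun z hz => ?_).trans ?_
  · simp only [Pi.smul_apply, smul_eq_mul, ENNReal.ofReal_mul ht.le, mul_assoc,
      ENNReal.tsum_mul_left]
    gcongr
    exact hw z hz
  · simp only [mul_assoc, ENNReal.tsum_mul_left, le_refl]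

lemma fracCover_smul {t : ℝ} (ht : 0 < t) (g : Y → ℝ) :
    fracCover Z B a (t • g) = ENNReal.ofReal t * fracCover Z B a g := by
  refine (fracCover_smul_le ht g).antisymm ?_
  have h := fracCover_smul_le (Z := Z) (B := B) (a := a) (inv_pos.2 ht) (t • g)
  rw [smul_smul, inv_mul_cancel₀ ht.ne', one_smul] at h
  calc ENNReal.ofReal t * fracCover Z B a g
      ≤ ENNReal.ofReal t * (ENNReal.ofReal t⁻¹ * fracCover Z B a (t • g)) := by gcongr
    _ = fracCover Z B a (t • g) := by
        rw [← mul_assoc, ← ENNReal.ofReal_mul ht.le, mul_inv_cancel₀ ht.ne']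
        simp

lemma fracCover_mono {g h : Y → ℝ} (hgh : ∀ z ∈ Z, g z ≤ h z) :
    fracCover Z B a g ≤ fracCover Z B a h :=
  le_iInf₂ fun w hw => iInf₂_le w fun z hz =>
    (ENNReal.ofReal_le_ofReal (hgh z hz)).trans (hw z hz)

lemma fracCover_nonpos {g : Y → ℝ} (hg : ∀ z ∈ Z, g z ≤ 0) : fracCover Z B a g = 0 := by
  refine le_antisymm ((iInf₂_le (fun _ => 0) fun z hz => ?_).trans (by simp)) zero_le
  simp [ENNReal.ofReal_of_nonpos (hg z hz)]

/-- A function bounded by `1` and nonpositive off a single member `B i` costs at most `a i`. -/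
lemma fracCover_le_single {g : Y → ℝ} (i : ι) (h1 : ∀ x, g x ≤ 1) (h0 : ∀ x ∉ B i, g x ≤ 0) :
    fracCover Z B a g ≤ a i := by
  classical
  refine (iInf₂_le (Pi.single i 1) fun z _ => ?_).trans ?_
  · refine le_trans ?_ (ENNReal.le_tsum i)
    by_cases hz : z ∈ B i
    · simpa [hz] using h1 z
    · simp [hz, ENNReal.ofReal_of_nonpos (h0 z hz)]
  · rw [tsum_eq_single i (fun j hj => by simp [hj])]
    simp

lemma fracCover_one_le_sum {F : Finset ι} (hF : Z ⊆ ⋃ i ∈ F, B i) :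
    fracCover Z B a 1 ≤ ∑ i ∈ F, a i := by
  classical
  refine (iInf₂_le (fun i => if i ∈ F then 1 else 0) fun z hz => ?_).trans ?_
  · obtain ⟨i, hi, hzi⟩ := mem_iUnion₂.1 (hF hz)
    refine le_trans ?_ (ENNReal.le_tsum i)
    simp [hi, hzi]
  · rw [tsum_eq_sum (s := F) fun i hi => by simp [hi]]
    exact (Finset.sum_congr rfl fun i hi => by simp [hi]).le

/-- **Frostman's lemma for fractional covers.** If the fractional covering number of the compact
set `Z` by open sets `B i` of cost `a i` is positive and finite, then `Z` carries a probability
measure giving each `B i` mass at most its normalised cost. -/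
lemma exists_measure_le_of_fracCover [MetricSpace Y] [CompactSpace Y]
    [MeasurableSpace Y] [BorelSpace Y]
    (hZ : IsCompact Z) (hZne : Z.Nonempty) (hB : ∀ i, IsOpen (B i))
    (hpos : fracCover Z B a 1 ≠ 0) (hfin : fracCover Z B a 1 ≠ ⊤) :
    ∃ μ : Measure Y, IsProbabilityMeasure μ ∧ μ Z = 1 ∧
      ∀ i, μ (B i) ≤ (fracCover Z B a 1)⁻¹ * a i := by
  set q := fracCover Z B a 1 with hq
  have hfinite : ∀ g : C(Y, ℝ), fracCover Z B a g ≠ ⊤ := by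
    intro g
    have hn : 0 < ‖g‖ + 1 := by positivity
    refine ne_top_of_le_ne_top (ENNReal.mul_ne_top (ENNReal.ofReal_ne_top (r := ‖g‖ + 1)) hfin) ?_
    rw [hq, ← fracCover_smul hn]
    refine fracCover_mono fun z _ => ?_
    have := (le_abs_self _).trans (g.norm_coe_le_norm z)
    simp only [Pi.smul_apply, Pi.one_apply, smul_eq_mul, mul_one]
    linarith
  -- The sublinear functional dominating the linear functional to be constructed.
  let N : C(Y, ℝ) → ℝ := fun g => (fracCover Z B a g).toReal
  have hne : (1 : C(Y, ℝ)) ≠ 0 := by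
    obtain ⟨z, _⟩ := hZne
    intro h
    simpa using congrArg (fun g : C(Y, ℝ) => g z) h
  obtain ⟨L, hL1, hLN⟩ := exists_extension_of_le_sublinear
    (LinearPMap.mkSpanSingleton (K := ℝ) (σ := RingHom.id ℝ) (1 : C(Y, ℝ)) q.toReal hne) N
    (by
      intro t ht g
      simp only [N]
      rw [show ((t • g : C(Y, ℝ)) : Y → ℝ) = t • (g : Y → ℝ) from rfl, fracCover_smul ht,
        ENNReal.toReal_mul, ENNReal.toReal_ofReal ht.le])
    (by
      intro g h
      simp only [N]
      rw [← ENNReal.toReal_add (hfinite g) (hfinite h)]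
      exact ENNReal.toReal_mono (ENNReal.add_ne_top.2 ⟨hfinite g, hfinite h⟩) (fracCover_add _ _))
    (by
      rintro ⟨x, hx⟩
      obtain ⟨t, rfl⟩ := Submodule.mem_span_singleton.1 hx
      rw [LinearPMap.mkSpanSingleton'_apply]
      simp only [N, RingHom.id_apply, smul_eq_mul]
      rcases lt_or_ge 0 t with ht | ht
      · rw [show ((t • (1 : C(Y, ℝ)) : C(Y, ℝ)) : Y → ℝ) = t • (1 : Y → ℝ) from rfl,
          fracCover_smul ht, ENNReal.toReal_mul, ENNReal.toReal_ofReal ht.le]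
      · exact (mul_nonpos_of_nonpos_of_nonneg ht ENNReal.toReal_nonneg).trans
          ENNReal.toReal_nonneg)
  have hL1' : L 1 = q.toReal := by
    have := hL1 ⟨1, Submodule.mem_span_singleton_self _⟩
    rw [this]
    exact LinearPMap.mkSpanSingleton_apply ..
  have hLnonneg : ∀ g : C(Y, ℝ), 0 ≤ g → 0 ≤ L g := by
    intro g hg
    have h := hLN (-g)
    have h0 : N (-g) = 0 := by
      simp only [N]
      rw [fracCover_nonpos, ENNReal.toReal_zero]
      intro z _
      simpa using hg z
    rw [h0, map_neg] at h
    linarith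
  let Λ : CompactlySupportedContinuousMap Y ℝ →ₚ[ℝ] ℝ := PositiveLinearMap.mk₀
    { toFun := fun g => L (g : C(Y, ℝ))
      map_add' := fun g h => L.map_add (g : C(Y, ℝ)) (h : C(Y, ℝ))
      map_smul' := fun t g => L.map_smul t (g : C(Y, ℝ)) }
    (fun g hg => hLnonneg _ hg)
  have hΛ : ∀ g : C(Y, ℝ),
      Λ (CompactlySupportedContinuousMap.continuousMapEquiv g) = L g := fun g => rfl
  let ν := RealRMK.rieszMeasure Λ
  have hνK : ∀ (g : C(Y, ℝ)) (K : Set Y), (∀ x, 0 ≤ g x) → IsCompact K → (∀ x ∈ K, g x = 1) →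
      ν K ≤ fracCover Z B a g := by
    intro g K hg hK hgK
    refine (RealRMK.rieszMeasure_le_of_eq_one Λ
      (f := CompactlySupportedContinuousMap.continuousMapEquiv g) hg hK hgK).trans ?_
    rw [hΛ, ← ENNReal.ofReal_toReal (hfinite g)]
    exact ENNReal.ofReal_le_ofReal (hLN g)
  have hνopen : ∀ (U : Set Y) (b : ℝ≥0∞), IsOpen U → (∀ g : Y → ℝ, (∀ x, g x ≤ 1) →
      (∀ x ∉ U, g x ≤ 0) → fracCover Z B a g ≤ b) → ν U ≤ b := by
    intro U b hU hb
    rw [hU.measure_eq_iSup_isCompact ν]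
    refine iSup₂_le fun K hKU => iSup_le fun hK => ?_
    obtain ⟨g, hg0, hg1, hg⟩ := exists_continuous_zero_one_of_isClosed hU.isClosed_compl
      hK.isClosed (disjoint_left.2 fun x hx hxK => hx (hKU hxK))
    exact (hνK g K (fun x => (hg x).1) hK hg1).trans
      (hb g (fun x => (hg x).2) fun x hx => (hg0 hx).le)
  have hνuniv_le : ν univ ≤ q := hνK 1 univ (fun _ => zero_le_one) isCompact_univ fun _ _ => rfl
  have : IsFiniteMeasure ν := ⟨hνuniv_le.trans_lt (lt_top_iff_ne_top.2 hfin)⟩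
  have hνuniv : ν univ = q := by
    have h := RealRMK.integral_rieszMeasure Λ
      (CompactlySupportedContinuousMap.continuousMapEquiv (1 : C(Y, ℝ)))
    rw [hΛ, hL1'] at h
    have h2 : ∫ x, (CompactlySupportedContinuousMap.continuousMapEquiv (1 : C(Y, ℝ))) x ∂ν
        = ν.real univ := by
      have : ∀ x, (CompactlySupportedContinuousMap.continuousMapEquiv (1 : C(Y, ℝ))) x = (1 : ℝ) :=
        fun _ => rfl
      simp [this]
    rw [h2] at h
    exact (ENNReal.toReal_eq_toReal_iff' (measure_ne_top _ _) hfin).1 h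
  have hνZc : ν Zᶜ = 0 := by
    refine le_antisymm (hνopen _ 0 hZ.isClosed.isOpen_compl fun g _ h0 => ?_) zero_le
    exact (fracCover_nonpos fun z hz => h0 z (by simpa using hz)).le
  have hνZ : ν Z = q := by
    rw [← hνuniv, ← measure_add_measure_compl hZ.measurableSet, hνZc, add_zero]
  refine ⟨q⁻¹ • ν, ⟨?_⟩, ?_, fun i => ?_⟩
  · simp [hνuniv, ENNReal.inv_mul_cancel hpos hfin]
  · simp [hνZ, ENNReal.inv_mul_cancel hpos hfin]
  · simp only [Measure.smul_apply, smul_eq_mul]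
    gcongr
    exact hνopen _ _ (hB i) fun g h1 h0 => fracCover_le_single i h1 h0

end fracCover

/-! ### Bowen balls and the zero potential -/

section bowenBall

variable {Y : Type} [MetricSpace Y]

lemma continuous_nIter {f : ℕ → Y → Y} (hf : ∀ n, Continuous (f n)) (n : ℕ) :
    Continuous (nIter f n) := by
  induction n with
  | zero => exact continuous_id
  | succ n ih => exact (hf n).comp ih

lemma isOpen_bowenBall {f : ℕ → Y → Y} (hf : ∀ n, Continuous (f n)) (n : ℕ) (x : Y) (ε : ℝ) :
    IsOpen (bowenBall f n x ε) := by
  have : bowenBall f n x ε = ⋂ j ∈ Finset.range n, {y | dist (nIter f j x) (nIter f j y) < ε} := by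
    ext y; simp [bowenBall]
  rw [this]
  exact isOpen_biInter_finset fun j _ =>
    isOpen_lt (continuous_const.dist (continuous_nIter hf j)) continuous_const

lemma mem_bowenBall_self (f : ℕ → Y → Y) (n : ℕ) (x : Y) {ε : ℝ} (hε : 0 < ε) :
    x ∈ bowenBall f n x ε := fun j _ => by simpa using hε

lemma mem_bowenBall_comm {f : ℕ → Y → Y} {n : ℕ} {x y : Y} {ε : ℝ} :
    y ∈ bowenBall f n x ε ↔ x ∈ bowenBall f n y ε := by
  simp only [bowenBall, mem_ofPred_eq, dist_comm]

lemma bowenBall_mono (f : ℕ → Y → Y) (n : ℕ) (x : Y) {ε ε' : ℝ} (h : ε ≤ ε') :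
    bowenBall f n x ε ⊆ bowenBall f n x ε' := fun _ hy j hj => (hy j hj).trans_le h

lemma mem_bowenBall_trans {f : ℕ → Y → Y} {n : ℕ} {x y z : Y} {ε δ : ℝ}
    (hxy : y ∈ bowenBall f n x ε) (hyz : z ∈ bowenBall f n y δ) :
    z ∈ bowenBall f n x (ε + δ) := fun j hj =>
  (dist_triangle _ _ _).trans_lt (add_lt_add (hxy j hj) (hyz j hj))

lemma birkSum_zero {W : Type} (f : ℕ → W → W) (n : ℕ) (x : W) : birkSum f (fun _ => 0) n x = 0 := by
  simp [birkSum]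

lemma birkSupBall_zero (f : ℕ → Y → Y) (n : ℕ) (x : Y) (ε : ℝ) :
    birkSupBall f (fun _ => 0) n x ε = 0 := by
  have h : birkSum f (fun _ => 0) n = fun _ => 0 := funext (birkSum_zero f n)
  rcases (bowenBall f n x ε).eq_empty_or_nonempty with h0 | h0
  · simp [birkSupBall, h0]
  · simp [birkSupBall, h, h0.image_const]

lemma Mpre_anti (f : ℕ → Y → Y) (Z : Set Y) (n : ℕ) (α : ℝ) {ε ε' : ℝ} (h : ε ≤ ε') :
    Mpre f (fun _ => 0) Z n α ε' ≤ Mpre f (fun _ => 0) Z n α ε := by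
  refine le_sInf ?_
  rintro S ⟨u, c, m, hm, hc, rfl⟩
  refine sInf_le ⟨u, c, m, hm, hc.trans ?_, by simp only [birkSupBall_zero]⟩
  exact iUnion₂_mono fun i _ => bowenBall_mono f _ _ h

lemma Mpre_mono (f : ℕ → Y → Y) (Z : Set Y) {n n' : ℕ} (h : n ≤ n') (α ε : ℝ) :
    Mpre f (fun _ => 0) Z n α ε ≤ Mpre f (fun _ => 0) Z n' α ε := by
  refine le_sInf ?_
  rintro S ⟨u, c, m, hm, hc, rfl⟩
  exact sInf_le ⟨u, c, m, fun i hi => h.trans (hm i hi), hc, rfl⟩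

lemma Wpre_anti (f : ℕ → Y → Y) (Z : Set Y) (n : ℕ) (α : ℝ) {ε ε' : ℝ} (h : ε ≤ ε') :
    Wpre f (fun _ => 0) Z n α ε' ≤ Wpre f (fun _ => 0) Z n α ε := by
  refine le_sInf ?_
  rintro S ⟨u, cx, m, c, hc, hm, hcov, rfl⟩
  refine sInf_le ⟨u, cx, m, c, hc, hm, fun z hz => (hcov z hz).trans ?_,
    by simp only [birkSupBall_zero]⟩
  refine ENNReal.tsum_le_tsum fun i => ?_
  exact indicator_le_indicator_of_subset (bowenBall_mono f _ _ h) (fun _ => zero_le) z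

/-- A cover is a weighted cover with all weights equal to `1`. -/
lemma Wpre_le_Mpre (f : ℕ → Y → Y) (Z : Set Y) (n : ℕ) (α ε : ℝ) :
    Wpre f (fun _ => 0) Z n α ε ≤ Mpre f (fun _ => 0) Z n α ε := by
  refine le_sInf ?_
  rintro S ⟨u, c, m, hm, hc, rfl⟩
  refine sInf_le ⟨u, c, m, fun _ => 1, fun _ _ => one_pos, hm, fun z hz => ?_, by simp⟩
  obtain ⟨i, hi, hzi⟩ := mem_iUnion₂.1 (hc hz)
  refine le_trans ?_ (ENNReal.le_tsum (⟨i, hi⟩ : u))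
  simp [hzi]

lemma PBeps_anti (f : ℕ → Y → Y) (Z : Set Y) : Antitone (PBeps f (fun _ => 0) Z) := by
  intro ε ε' h
  refine sInf_le_sInf (image_mono fun α hα => ?_)
  refine le_antisymm (le_trans ?_ (le_of_eq hα)) zero_le
  exact iSup_mono fun n => Mpre_anti f Z n α h

lemma PWeps_anti (f : ℕ → Y → Y) (Z : Set Y) : Antitone (PWeps f (fun _ => 0) Z) := by
  intro ε ε' h
  refine sInf_le_sInf (image_mono fun α hα => ?_)
  refine le_antisymm (le_trans ?_ (le_of_eq hα)) zero_le
  exact iSup_mono fun n => Wpre_anti f Z n α h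

lemma PWeps_le_PBeps (f : ℕ → Y → Y) (Z : Set Y) (ε : ℝ) :
    PWeps f (fun _ => 0) Z ε ≤ PBeps f (fun _ => 0) Z ε := by
  refine sInf_le_sInf (image_mono fun α hα => ?_)
  refine le_antisymm (le_trans ?_ (le_of_eq hα)) zero_le
  exact iSup_mono fun n => Wpre_le_Mpre f Z n α ε

/-- The limit as `ε → 0⁺` of a nonincreasing function of `ε` is its supremum. -/
lemma limUnder_nhdsGT_eq_iSup {F : ℝ → EReal} (hF : AntitoneOn F (Ioi 0)) :
    limUnder (nhdsWithin 0 (Ioi 0)) F = ⨆ ε ∈ Ioi (0 : ℝ), F ε := by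
  rw [(hF.tendsto_nhdsGT (OrderTop.bddAbove _)).limUnder_eq, sSup_image]

lemma hBtop_eq (f : ℕ → Y → Y) (Z : Set Y) :
    hBtop f Z = ⨆ ε ∈ Ioi (0 : ℝ), PBeps f (fun _ => 0) Z ε :=
  limUnder_nhdsGT_eq_iSup ((PBeps_anti f Z).antitoneOn _)

lemma hWBtop_eq (f : ℕ → Y → Y) (Z : Set Y) :
    hWBtop f Z = ⨆ ε ∈ Ioi (0 : ℝ), PWeps f (fun _ => 0) Z ε :=
  limUnder_nhdsGT_eq_iSup ((PWeps_anti f Z).antitoneOn _)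

lemma hWBtop_le_hBtop (f : ℕ → Y → Y) (Z : Set Y) : hWBtop f Z ≤ hBtop f Z := by
  rw [hBtop_eq, hWBtop_eq]
  exact iSup₂_mono fun ε _ => PWeps_le_PBeps f Z ε

/-! ### From fractional covers to covers -/

/-- The family of Bowen balls of order at least `N`, indexed by `(k, x)` with order `N + k`. -/
def ballFam (f : ℕ → Y → Y) (N : ℕ) (ε : ℝ) (p : ℕ × Y) : Set Y := bowenBall f (N + p.1) p.2 ε

/-- The cost `exp (-s n)` of a Bowen ball of order `n = N + k`. -/
def ballCost (N : ℕ) (s : ℝ) (p : ℕ × Y) : ℝ≥0∞ :=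
  ENNReal.ofReal (Real.exp (-s * ((N + p.1 : ℕ) : ℝ)))

/-- A countable set of pairs (order, center) can be used as a cover in `Mpre`. -/
lemma Mpre_le_tsum (f : ℕ → Y → Y) {Z : Set Y} (hZ : Z.Nonempty) {n : ℕ} {α ε : ℝ}
    {T : Set (ℕ × Y)} (hT : T.Countable) (hn : ∀ p ∈ T, n ≤ p.1)
    (hcov : ∀ z ∈ Z, ∃ p ∈ T, z ∈ bowenBall f p.1 p.2 ε) :
    Mpre f (fun _ => 0) Z n α ε ≤ ∑' p : T, ENNReal.ofReal (Real.exp (-α * (p.1.1 : ℝ))) := by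
  obtain ⟨x₀, _⟩ := hZ
  obtain ⟨e, he⟩ := (countable_coe_iff.2 hT).exists_injective_nat
  let c : ℕ → Y := Function.extend e (fun p => p.1.2) fun _ => x₀
  let m : ℕ → ℕ := Function.extend e (fun p => p.1.1) fun _ => 0
  have hc : ∀ p, c (e p) = p.1.2 := fun p => he.extend_apply _ _ _
  have hm : ∀ p, m (e p) = p.1.1 := fun p => he.extend_apply _ _ _
  refine sInf_le ⟨range e, c, m, ?_, ?_, ?_⟩
  · rintro _ ⟨p, rfl⟩
    rw [hm]
    exact hn _ p.2
  · intro z hz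
    obtain ⟨p, hp, hzp⟩ := hcov z hz
    refine mem_iUnion₂.2 ⟨e ⟨p, hp⟩, mem_range_self _, ?_⟩
    rw [hc, hm]
    exact hzp
  · simp only [birkSupBall_zero, add_zero]
    rw [tsum_range (g := e) (fun i => ENNReal.ofReal (Real.exp (-α * (m i : ℝ)))) he]
    simp only [hm]

/-- Every set has a maximal `ε`-separated subset for the Bowen metric `d_n`. -/
lemma exists_maximal_separated (f : ℕ → Y → Y) (n : ℕ) {ε : ℝ} (hε : 0 < ε) (A : Set Y) :
    ∃ E ⊆ A, E.Pairwise (fun x y => y ∉ bowenBall f n x ε) ∧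
      ∀ z ∈ A, ∃ y ∈ E, z ∈ bowenBall f n y ε := by
  obtain ⟨E, hE⟩ := zorn_subset
    {E : Set Y | E ⊆ A ∧ E.Pairwise (fun x y => y ∉ bowenBall f n x ε)} (by
      intro c hc hchain
      refine ⟨⋃₀ c, ⟨sUnion_subset fun s hs => (hc hs).1, ?_⟩, fun s hs => subset_sUnion_of_mem hs⟩
      exact (pairwise_sUnion hchain.directedOn).2 fun s hs => (hc hs).2)
  refine ⟨E, hE.prop.1, hE.prop.2, fun z hz => ?_⟩
  by_contra! hcon
  have hzE : z ∉ E := fun h => hcon z h (mem_bowenBall_self f n z hε)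
  refine hzE (hE.le_of_ge (y := insert z E) ⟨insert_subset hz hE.prop.1, ?_⟩
    (subset_insert z E) (mem_insert z E))
  refine hE.prop.2.insert fun y hy _ => ⟨fun h => hcon y hy (mem_bowenBall_comm.1 h), hcon y hy⟩

/-- The counting estimate behind the covering argument: Bowen balls of one fixed order centred at
`2ε`-separated points are disjoint, so if each of these points carries fractional weight at least
`t`, then `t` times their number is at most the total weight. -/
lemma tsum_separated_le (f : ℕ → Y → Y) (n : ℕ) {ε : ℝ} {E : Set Y}
    (hE : E.Pairwise (fun x y => y ∉ bowenBall f n x (2 * ε))) (w : Y → ℝ≥0∞) {t : ℝ≥0∞}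
    (hw : ∀ y ∈ E, t ≤ ∑' x, w x * (bowenBall f n x ε).indicator 1 y) :
    ∑' _ : E, t ≤ ∑' x, w x := by
  calc ∑' _ : E, t ≤ ∑' y : E, ∑' x, w x * (bowenBall f n x ε).indicator 1 (y : Y) :=
        ENNReal.tsum_le_tsum fun y => hw y y.2
    _ = ∑' x, w x * ∑' y : E, (bowenBall f n x ε).indicator 1 (y : Y) := by
        rw [ENNReal.tsum_comm]
        simp only [ENNReal.tsum_mul_left]
    _ ≤ ∑' x, w x * 1 := by
        refine ENNReal.tsum_le_tsum fun x => ?_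
        gcongr
        by_cases h : ∃ y : E, (y : Y) ∈ bowenBall f n x ε
        · obtain ⟨y, hy⟩ := h
          rw [tsum_eq_single y]
          · simp [hy]
          · intro y' hy'
            refine indicator_of_notMem (fun h' => ?_) _
            refine hE y.2 y'.2 (fun h => hy' (Subtype.ext h.symm)) ?_
            rw [two_mul]
            exact mem_bowenBall_trans (mem_bowenBall_comm.1 hy) h'
        · push Not at h
          simp [h]
    _ = ∑' x, w x := by simp

/-- Fractional covers by `ε`-balls can be replaced by honest covers by `2ε`-balls at an
arbitrarily small exponential loss `δ`, once the tail of `∑ exp (-δ n)` is less than `1`. -/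
lemma Mpre_le_fracCover (f : ℕ → Y → Y) {Z : Set Y} (hZ : Z.Nonempty) {N : ℕ} {s δ ε : ℝ}
    (hε : 0 < ε) (hN : ∑' k : ℕ, ENNReal.ofReal (Real.exp (-δ * ((N + k : ℕ) : ℝ))) < 1) :
    Mpre f (fun _ => 0) Z N (s + δ) (2 * ε) ≤
      fracCover Z (ballFam f N ε) (ballCost N s) 1 := by
  refine le_iInf₂ fun w hw => ?_
  let t : ℕ → ℝ≥0∞ := fun k => ENNReal.ofReal (Real.exp (-δ * ((N + k : ℕ) : ℝ)))
  let b : ℕ → ℝ≥0∞ := fun k => ENNReal.ofReal (Real.exp (-s * ((N + k : ℕ) : ℝ)))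
  have hb : ∀ k, b k ≠ 0 := fun k => by simp [b, Real.exp_pos]
  have ht : ∀ k, t k ≠ 0 := fun k => by simp [t, Real.exp_pos]
  have htb : ∀ k, ENNReal.ofReal (Real.exp (-(s + δ) * ((N + k : ℕ) : ℝ))) = t k * b k := by
    intro k
    simp only [t, b]
    rw [← ENNReal.ofReal_mul (Real.exp_pos _).le, ← Real.exp_add]
    congr 2
    ring
  have hsum : ∑' p, w p * ballCost N s p = ∑' k, (∑' x, w (k, x)) * b k := by
    have h := ENNReal.tsum_prod (f := fun k x => w (k, x) * b k)
    simp only [ENNReal.tsum_mul_right] at h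
    exact h
  rw [hsum]
  by_cases htop : ∑' k, (∑' x, w (k, x)) * b k = ⊤
  · rw [htop]; exact le_top
  -- The points whose fractional weight at order `N + k` reaches the threshold `t k`.
  let A : ℕ → Set Y := fun k =>
    {z ∈ Z | t k ≤ ∑' x, w (k, x) * (bowenBall f (N + k) x ε).indicator 1 z}
  have hA : ∀ z ∈ Z, ∃ k, z ∈ A k := by
    intro z hz
    by_contra! hcon
    have h1 : ∀ k, ∑' x, w (k, x) * (bowenBall f (N + k) x ε).indicator 1 z ≤ t k := fun k =>
      le_of_not_ge fun h => hcon k ⟨hz, h⟩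
    have h2 := hw z hz
    have h3 := ENNReal.tsum_prod
      (f := fun k x => w (k, x) * (bowenBall f (N + k) x ε).indicator (1 : Y → ℝ≥0∞) z)
    have h4 : ∑' p, w p * (ballFam f N ε p).indicator 1 z < 1 :=
      (h3.trans_le (ENNReal.tsum_le_tsum h1)).trans_lt hN
    simp only [Pi.one_apply, ENNReal.ofReal_one] at h2
    exact absurd h4 (not_lt.2 h2)
  choose E hEA hEsep hEcov using fun k =>
    exists_maximal_separated f (N + k) (ε := 2 * ε) (by positivity) (A k)
  have hcount : ∀ k, ∑' _ : E k, t k ≤ ∑' x, w (k, x) := fun k =>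
    tsum_separated_le f (N + k) (hEsep k) (fun x => w (k, x)) fun y hy => (hEA k hy).2
  have hEc : ∀ k, (E k).Countable := by
    intro k
    have hk : ∑' x, w (k, x) ≠ ⊤ := by
      intro h
      have := ENNReal.ne_top_of_tsum_ne_top htop k
      rw [h, ENNReal.top_mul (hb k)] at this
      exact this rfl
    have := Summable.countable_support_ennreal (ne_top_of_le_ne_top hk (hcount k))
    rw [Function.support_const (ht k)] at this
    exact countable_coe_iff.1 (countable_univ_iff.1 this)
  let T : Set (ℕ × Y) := ⋃ k, (fun y => (N + k, y)) '' E k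
  have hTc : T.Countable := countable_iUnion fun k => (hEc k).image _
  refine (Mpre_le_tsum f hZ hTc ?_ ?_).trans ?_
  · rintro p hp
    obtain ⟨k, y, _, rfl⟩ := mem_iUnion.1 hp
    exact Nat.le_add_right N k
  · intro z hz
    obtain ⟨k, hk⟩ := hA z hz
    obtain ⟨y, hy, hzy⟩ := hEcov k z hk
    exact ⟨(N + k, y), mem_iUnion.2 ⟨k, y, hy, rfl⟩, hzy⟩
  · refine (ENNReal.tsum_iUnion_le_tsum
      (fun p : ℕ × Y => ENNReal.ofReal (Real.exp (-(s + δ) * (p.1 : ℝ)))) _).trans ?_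
    refine ENNReal.tsum_le_tsum fun k => ?_
    rw [tsum_image (fun p : ℕ × Y => ENNReal.ofReal (Real.exp (-(s + δ) * (p.1 : ℝ))))
      (fun x _ y _ h => (Prod.ext_iff.1 h).2)]
    simp only [htb, ENNReal.tsum_mul_right]
    gcongr
    exact hcount k

lemma exists_tail_lt_one {δ : ℝ} (hδ : 0 < δ) :
    ∃ N₁ : ℕ, ∀ N ≥ N₁, ∑' k : ℕ, ENNReal.ofReal (Real.exp (-δ * ((N + k : ℕ) : ℝ))) < 1 := by
  have hs : Summable fun n : ℕ => Real.exp (-δ * n) := by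
    simpa [mul_comm] using Real.summable_exp_nat_mul_iff.2 (neg_lt_zero.2 hδ)
  have h0 := tendsto_sum_nat_add fun n : ℕ => Real.exp (-δ * n)
  obtain ⟨N₁, h1⟩ := eventually_atTop.1 (h0.eventually (gt_mem_nhds one_pos))
  refine ⟨N₁, fun N hN => ?_⟩
  have h2 := h1 N hN
  have hs' := (summable_nat_add_iff N).2 hs
  simp only [Nat.add_comm N]
  rw [← ENNReal.ofReal_tsum_of_nonneg (fun _ => (Real.exp_pos _).le) hs', ENNReal.ofReal_lt_one]
  exact h2

end bowenBall

/-! ### The local lower entropy -/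

/-- The expression whose lower limit defines the local entropy, in terms of the mass of a ball. -/
def massRate (n : ℕ) (m : ℝ≥0∞) : EReal :=
  (((n : ℝ)⁻¹ : ℝ) : EReal) * (-(ENNReal.log m) + ((0 : ℝ) : EReal))

lemma le_massRate_iff {n : ℕ} (hn : 1 ≤ n) {m : ℝ≥0∞} (hm : m ≠ ⊤) (s : ℝ) :
    (s : EReal) ≤ massRate n m ↔ m ≤ ENNReal.ofReal (Real.exp (-s * n)) := by
  have hn' : (0 : ℝ) < n := by exact_mod_cast hn
  rcases eq_or_ne m 0 with rfl | h0
  · simp [massRate, EReal.coe_mul_top_of_pos (inv_pos.2 hn')]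
  · lift m to NNReal using hm
    have hr : (0 : ℝ) < m := by
      have : m ≠ 0 := by simpa using h0
      exact_mod_cast pos_iff_ne_zero.2 this
    rw [massRate, ← ENNReal.ofReal_coe_nnreal, ENNReal.log_ofReal_of_pos hr,
      ENNReal.ofReal_le_ofReal_iff (Real.exp_pos _).le, ← Real.log_le_iff_le_exp hr]
    norm_cast
    rw [add_zero, inv_mul_eq_div, le_div_iff₀ hn', neg_mul, le_neg]

lemma massRate_anti (n : ℕ) : Antitone (massRate n) := by
  intro m m' h
  refine mul_le_mul_of_nonneg_left (add_le_add_left (EReal.neg_le_neg_iff.2 ?_) _) ?_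
  · exact ENNReal.log_le_log_iff.2 h
  · exact_mod_cast (inv_nonneg.2 (Nat.cast_nonneg n) : (0 : ℝ) ≤ (n : ℝ)⁻¹)

lemma hloc_eq (f : ℕ → X → X) (μ : Measure X) (x : X) :
    hloc f μ x =
      ⨆ ε ∈ Ioi (0 : ℝ), atTop.liminf fun n : ℕ => massRate n (μ (bowenBall f n x ε)) := by
  rw [hloc, Ploc]
  simp only [birkSum_zero]
  refine limUnder_nhdsGT_eq_iSup fun ε _ ε' _ h => ?_
  exact liminf_le_liminf (Eventually.of_forall fun n =>
    massRate_anti n (measure_mono (bowenBall_mono f n x h)))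

lemma le_hloc (f : ℕ → X → X) (μ : Measure X) [IsProbabilityMeasure μ] {x : X} {s ε : ℝ}
    (hε : 0 < ε)
    (h : ∀ᶠ n : ℕ in atTop, μ (bowenBall f n x ε) ≤ ENNReal.ofReal (Real.exp (-s * n))) :
    (s : EReal) ≤ hloc f μ x := by
  rw [hloc_eq]
  refine le_trans ?_ (le_iSup₂ (f := fun ε (_ : ε ∈ Ioi (0 : ℝ)) =>
    atTop.liminf fun n : ℕ => massRate n (μ (bowenBall f n x ε))) ε hε)
  refine le_liminf_of_le (h := ?_)
  filter_upwards [h, eventually_ge_atTop 1] with n hn h1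
  exact (le_massRate_iff h1 (measure_ne_top _ _) s).2 hn

lemma hloc_nonneg (f : ℕ → X → X) (μ : Measure X) [IsProbabilityMeasure μ] (x : X) :
    0 ≤ hloc f μ x :=
  le_hloc f μ (s := 0) one_pos (Eventually.of_forall fun n => by simpa using prob_le_one)

/-- Since the local entropy is nonnegative, its integral reduces to a lower integral. -/
lemma hmeas_eq (f : ℕ → X → X) (μ : Measure X) [IsProbabilityMeasure μ] :
    hmeas f μ = ((∫⁻ x, (hloc f μ x).toENNReal ∂μ : ℝ≥0∞) : EReal) := by
  have h : ∀ x, ERealToENNReal (-(hloc f μ x)) = 0 := fun x =>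
    EReal.toENNReal_of_nonpos (by simpa using hloc_nonneg f μ x)
  change ERealIntegral μ (hloc f μ) = _
  simp only [ERealIntegral, h, lintegral_zero, EReal.coe_ennreal_zero, sub_zero]
  rfl

lemma le_hmeas (f : ℕ → X → X) (μ : Measure X) [IsProbabilityMeasure μ] {s : ℝ}
    (h : ∀ x, (s : EReal) ≤ hloc f μ x) : (s : EReal) ≤ hmeas f μ := by
  rw [hmeas_eq]
  calc (s : EReal) ≤ ((ENNReal.ofReal s : ℝ≥0∞) : EReal) := by
        rw [EReal.coe_ennreal_ofReal]
        exact_mod_cast le_max_left s 0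
    _ ≤ _ := by
        rw [EReal.coe_ennreal_le_coe_ennreal_iff]
        calc ENNReal.ofReal s = ∫⁻ _, ENNReal.ofReal s ∂μ := by simp
          _ ≤ _ := lintegral_mono fun x => by
            simpa using EReal.toENNReal_le_toENNReal (h x)

/-! ### The two inequalities -/

/-- Frostman's lemma applied to Bowen balls produces measures of nearly maximal local entropy. -/
lemma hBtop_le_iSup_hmeas [CompactSpace X] [BorelSpace X]
    {f : ℕ → X → X} (hf : ∀ n, Continuous (f n)) {Z : Set X} (hZne : Z.Nonempty)
    (hZ : IsCompact Z) :
    hBtop f Z ≤ ⨆ (μ : Measure X) (_ : IsProbabilityMeasure μ) (_ : μ Z = 1), hmeas f μ := by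
  rw [hBtop_eq]
  refine iSup₂_le fun ε (hε : 0 < ε) => ?_
  refine EReal.ge_of_forall_gt_iff_ge.1 fun s' hs' => ?_
  obtain ⟨r, hlt, hr⟩ := EReal.lt_iff_exists_real_btwn.1 hs'
  have hlt : s' < r := by exact_mod_cast hlt
  -- The gap between `s'` and `r` is split in two: one half is lost in replacing fractional covers
  -- by covers, the other one absorbs the multiplicative constant in Frostman's lemma.
  obtain ⟨δ, hδ, s, hs, hsr⟩ : ∃ δ > 0, ∃ s : ℝ, s = s' + δ ∧ s + δ = r :=
    ⟨(r - s') / 2, by linarith, (r + s') / 2, by ring, by ring⟩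
  have hM : Mlim f (fun _ => 0) Z r ε ≠ 0 := fun h0 =>
    absurd hr (not_lt.2 (sInf_le ⟨r, h0, rfl⟩))
  obtain ⟨N₀, hN₀⟩ : ∃ N, Mpre f (fun _ => 0) Z N r ε ≠ 0 := by
    by_contra! hcon
    exact hM (by simp [Mlim, hcon])
  obtain ⟨N₁, hN₁⟩ := exists_tail_lt_one hδ
  let N := max N₀ N₁
  have hpos : fracCover Z (ballFam f N (ε / 2)) (ballCost N s) 1 ≠ 0 := by
    intro h0
    have h1 := Mpre_le_fracCover f hZne (s := s) (half_pos hε) (hN₁ N (le_max_right _ _))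
    rw [h0, hsr, mul_div_cancel₀ ε two_ne_zero] at h1
    exact hN₀ (le_antisymm ((Mpre_mono f Z (le_max_left _ _) r ε).trans h1) zero_le)
  have hfin : fracCover Z (ballFam f N (ε / 2)) (ballCost N s) 1 ≠ ⊤ := by
    obtain ⟨F, hF⟩ := hZ.elim_finite_subcover (ballFam f N (ε / 2))
      (fun p => isOpen_bowenBall hf _ _ _) fun z _ =>
        mem_iUnion.2 ⟨(0, z), mem_bowenBall_self f _ z (half_pos hε)⟩
    refine ne_top_of_le_ne_top ?_ (fracCover_one_le_sum hF)
    exact ENNReal.sum_ne_top.2 fun _ _ => ENNReal.ofReal_ne_top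
  obtain ⟨μ, hμ, hμZ, hμB⟩ := exists_measure_le_of_fracCover hZ hZne
    (fun p => isOpen_bowenBall hf _ _ _) hpos hfin
  set q := fracCover Z (ballFam f N (ε / 2)) (ballCost N s) 1
  refine le_trans ?_ (le_iSup₂_of_le μ hμ (le_iSup_of_le hμZ le_rfl))
  refine le_hmeas f μ fun x => le_hloc f μ (half_pos hε) ?_
  have hq : q⁻¹ ≠ ⊤ := ENNReal.inv_ne_top.2 hpos
  have hlarge : ∀ᶠ n : ℕ in atTop, q⁻¹.toReal ≤ Real.exp (δ * n) :=
    (Real.tendsto_exp_atTop.comp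
      (tendsto_natCast_atTop_atTop.const_mul_atTop hδ)).eventually_ge_atTop _
  filter_upwards [hlarge, eventually_ge_atTop N] with n hn hNn
  obtain ⟨k, rfl⟩ := Nat.exists_eq_add_of_le hNn
  calc μ (bowenBall f (N + k) x (ε / 2)) ≤ q⁻¹ * ballCost N s (k, x) := hμB (k, x)
    _ ≤ ENNReal.ofReal (Real.exp (δ * ((N + k : ℕ) : ℝ))) * ballCost N s (k, x) := by
        gcongr
        rw [← ENNReal.ofReal_toReal hq]
        exact ENNReal.ofReal_le_ofReal hn
    _ = ENNReal.ofReal (Real.exp (-s' * ((N + k : ℕ) : ℝ))) := by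
        rw [ballCost, ← ENNReal.ofReal_mul (Real.exp_pos _).le, ← Real.exp_add, hs]
        congr 2
        ring

/-- The mass distribution principle for weighted covers. -/
lemma hmeas_le_hWBtop [BorelSpace X]
    {f : ℕ → X → X} (hf : ∀ n, Continuous (f n)) {Z : Set X} (μ : Measure X)
    [IsProbabilityMeasure μ] (hμZ : μ Zᶜ = 0) :
    hmeas f μ ≤ hWBtop f Z := by
  by_contra! hlt
  obtain ⟨s, hs1, hs2⟩ := EReal.lt_iff_exists_real_btwn.1 hlt
  -- Points of local entropy larger than `s` form a set of positive outer measure.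
  have hpos : μ {x | (s : EReal) < hloc f μ x} ≠ 0 := by
    intro h0
    have hae : ∀ᵐ x ∂μ, hloc f μ x ≤ s := by
      filter_upwards [measure_eq_zero_iff_ae_notMem.1 h0] with x hx
      exact not_lt.1 hx
    obtain ⟨x, hx⟩ := hae.exists
    have hs0 : 0 ≤ s := by exact_mod_cast (hloc_nonneg f μ x).trans hx
    refine absurd hs2 (not_lt.2 ?_)
    rw [hmeas_eq]
    calc ((∫⁻ x, (hloc f μ x).toENNReal ∂μ : ℝ≥0∞) : EReal)
        ≤ ((∫⁻ _, ENNReal.ofReal s ∂μ : ℝ≥0∞) : EReal) := by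
          rw [EReal.coe_ennreal_le_coe_ennreal_iff]
          refine lintegral_mono_ae (hae.mono fun x hx => ?_)
          exact EReal.toENNReal_le_toENNReal hx
      _ = s := by simp [hs0]
  let A : ℕ → ℕ → Set X := fun k N => {x | ∀ n ≥ N,
    μ (bowenBall f n x (1 / ((k : ℝ) + 1))) ≤ ENNReal.ofReal (Real.exp (-s * n))}
  have hsub : {x | (s : EReal) < hloc f μ x} ⊆ ⋃ k, ⋃ N, A k N := by
    intro x hx
    rw [mem_ofPred_eq, hloc_eq] at hx
    obtain ⟨ε, hx⟩ := lt_iSup_iff.1 hx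
    obtain ⟨hε, hx⟩ := lt_iSup_iff.1 hx
    obtain ⟨N, hN⟩ := eventually_atTop.1 (eventually_lt_of_lt_liminf hx)
    obtain ⟨k, hk⟩ := exists_nat_one_div_lt (mem_Ioi.1 hε)
    refine mem_iUnion₂.2 ⟨k, max N 1, fun n hn => ?_⟩
    exact (measure_mono (bowenBall_mono f n x hk.le)).trans
      ((le_massRate_iff ((le_max_right _ _).trans hn) (measure_ne_top _ _) s).1
        (hN n ((le_max_left _ _).trans hn)).le)
  obtain ⟨k, N, hkN⟩ : ∃ k N, μ (A k N) ≠ 0 := by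
    by_contra! hcon
    exact hpos (measure_mono_null hsub (measure_iUnion_null fun k => measure_iUnion_null (hcon k)))
  have hAZ : μ (A k N ∩ Z) ≠ 0 := by
    rw [measure_inter_conull hμZ]
    exact hkN
  let ε : ℝ := 1 / ((k : ℝ) + 1) / 2
  have hε : 0 < ε := by positivity
  have hεε : ε + ε = 1 / ((k : ℝ) + 1) := add_halves _
  have hW : ∀ α ≤ s, μ (A k N ∩ Z) ≤ Wpre f (fun _ => 0) Z N α ε := by
    intro α hα
    refine le_sInf ?_
    rintro S ⟨u, cx, m, c, hc, hm, hcov, rfl⟩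
    simp only [birkSupBall_zero, add_zero]
    -- Only the balls meeting `A k N` matter; their mass is controlled by recentring.
    let D : u → Set X := fun i => {z | z ∈ bowenBall f (m i) (cx i) ε ∧
      (bowenBall f (m i) (cx i) ε ∩ A k N).Nonempty}
    have hDmeas : ∀ i, MeasurableSet (D i) := fun i =>
      (isOpen_bowenBall hf _ _ _).measurableSet.inter (MeasurableSet.const _)
    let g : u → X → ℝ≥0∞ := fun i => (D i).indicator fun _ => ENNReal.ofReal (c i)
    have hg : ∀ i, Measurable (g i) := fun i => measurable_const.indicator (hDmeas i)
    have hD : ∀ i : u, μ (D i) ≤ ENNReal.ofReal (Real.exp (-α * (m i : ℝ))) := by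
      intro i
      by_cases hne : (bowenBall f (m i) (cx i) ε ∩ A k N).Nonempty
      · obtain ⟨y, hy, hyA⟩ := hne
        calc μ (D i) ≤ μ (bowenBall f (m i) y (1 / ((k : ℝ) + 1))) := by
              refine measure_mono fun z hz => ?_
              rw [← hεε]
              exact mem_bowenBall_trans (mem_bowenBall_comm.1 hy) hz.1
          _ ≤ ENNReal.ofReal (Real.exp (-s * (m i : ℝ))) := hyA _ (hm i i.2)
          _ ≤ _ := by gcongr
      · have : D i = ∅ := eq_empty_of_forall_notMem fun z hz => hne hz.2
        simp [this]
    calc μ (A k N ∩ Z) ≤ μ {z | 1 ≤ ∑' i, g i z} := by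
          refine measure_mono fun z hz => (hcov z hz.2).trans (ENNReal.tsum_le_tsum fun i => ?_)
          by_cases hzi : z ∈ bowenBall f (m i) (cx i) ε
          · have : z ∈ D i := ⟨hzi, z, hzi, hz.1⟩
            simp [g, hzi, this]
          · simp [hzi]
      _ ≤ ∫⁻ z, ∑' i, g i z ∂μ := by
          simpa using mul_meas_ge_le_lintegral (μ := μ) (Measurable.tsum hg) 1
      _ = ∑' i : u, ENNReal.ofReal (c i) * μ (D i) := by
          rw [lintegral_tsum fun i => (hg i).aemeasurable]
          exact tsum_congr fun i => lintegral_indicator_const (hDmeas i) _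
      _ ≤ _ := by
          gcongr with i
          exact hD i
  have hPW : (s : EReal) ≤ PWeps f (fun _ => 0) Z ε := by
    refine le_sInf ?_
    rintro _ ⟨α, hα, rfl⟩
    by_contra! hlt'
    have hα' : α ≤ s := by exact_mod_cast hlt'.le
    refine hAZ (le_antisymm ?_ zero_le)
    exact (hW α hα').trans ((le_iSup (fun n => Wpre f (fun _ => 0) Z n α ε) N).trans hα.le)
  refine absurd hs1 (not_lt.2 (hPW.trans ?_))
  rw [hWBtop_eq]
  exact le_iSup₂ (f := fun ε (_ : ε ∈ Ioi (0 : ℝ)) => PWeps f (fun _ => 0) Z ε) ε hε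

/-- Variational principle for topological entropy: for a nonempty compact
`Z ⊆ X`, `h^B(f,Z) = h^{WB}(f,Z) = sup { h̲_μ(f) : μ Borel probability measure, μ(Z) = 1 }`. -/
theorem statement5 [CompactSpace X] [BorelSpace X]
    (f : ℕ → X → X) (hf : ∀ n, Continuous (f n))
    (Z : Set X) (hZne : Z.Nonempty) (hZ : IsCompact Z) :
    hBtop f Z = hWBtop f Z ∧
      hBtop f Z = ⨆ (μ : Measure X) (_ : IsProbabilityMeasure μ) (_ : μ Z = 1), hmeas f μ := by
  have h1 : hBtop f Z ≤ ⨆ (μ : Measure X) (_ : IsProbabilityMeasure μ) (_ : μ Z = 1), hmeas f μ :=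
    hBtop_le_iSup_hmeas hf hZne hZ
  have h2 : (⨆ (μ : Measure X) (_ : IsProbabilityMeasure μ) (_ : μ Z = 1), hmeas f μ)
      ≤ hWBtop f Z :=
    iSup_le fun μ => iSup₂_le fun _ hμZ =>
      hmeas_le_hWBtop hf μ ((prob_compl_eq_zero_iff hZ.measurableSet).2 hμZ)
  have h3 := hWBtop_le_hBtop f Z
  exact ⟨(h1.trans h2).antisymm h3, h1.antisymm (h2.trans h3)⟩

end
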